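/- Define the weighted quantities b_w = Σ_{i=1}^n w_i · b^(i) ∈ ℝ^n and C_w = Σ_{i=1}^n w_i · C^(i) ∈ ℝ^{n×n}, and let u ∈ ℝ^n be any vector with C_w u = b_w. Then the weighted variance satisfies the global Barankin bound: Σ_{i=1}^n w_i · Var_i ≥ b_wᵀ u. -/

import Mathlib

open Finset Matrix

/-!
For a single distribution `p` and every vector `u`, expanding
`0 ≤ ∑ x, p x * (f x - (∑ j, u j * g j x) / p x) ^ 2` with `f = h - E` gives
`2 * bᵀ u ≤ Var + uᵀ C u`. This inequality is linear in `(Var, b, C)`, so it survives taking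
nonnegative combinations, and at a solution of `C_w u = b_w` the last term is again `b_wᵀ u`.
-/

section

variable {K X κ ι : Type*} [Field K] [Fintype X]

/-- The information matrix `C j k = ∑ x, g j x * g k x / p x` of the test functions `g j`, the rows
of the matrix `g`, with respect to the weight `p`. The bias vector of `f` is then `g *ᵥ f`. -/
def informationMatrix (p : X → K) (g : Matrix κ X K) : Matrix κ κ K :=
  of fun j k => ∑ x, g j x * g k x / p x

variable [Fintype κ]

theorem informationMatrix_mulVec (p : X → K) (g : Matrix κ X K) (u : κ → K) :
    informationMatrix p g *ᵥ u = g *ᵥ ((u ᵥ* g) / p) := by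
  ext j
  simp only [informationMatrix, mulVec, vecMul, dotProduct, of_apply, Pi.div_apply, sum_mul,
    sum_div, mul_sum]
  rw [sum_comm]
  exact sum_congr rfl fun x _ => sum_congr rfl fun k _ => by ring

theorem dotProduct_informationMatrix_mulVec (p : X → K) (g : Matrix κ X K) (u : κ → K) :
    u ⬝ᵥ informationMatrix p g *ᵥ u = ∑ x, (u ᵥ* g) x ^ 2 / p x := by
  rw [informationMatrix_mulVec, dotProduct_mulVec]
  exact sum_congr rfl fun x _ => by rw [Pi.div_apply, sq, mul_div_assoc]

variable [Fintype ι] [LinearOrder K] [IsStrictOrderedRing K]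

theorem two_mul_mul_le_mul_sq_add_sq_div {c : K} (hc : 0 < c) (a b : K) :
    2 * (a * b) ≤ c * b ^ 2 + a ^ 2 / c := by
  have square_expansion : c * (b - a / c) ^ 2 = c * b ^ 2 + a ^ 2 / c - 2 * (a * b) := by
    field_simp
    ring
  exact sub_nonneg.mp (square_expansion ▸ mul_nonneg hc.le (sq_nonneg _))

theorem two_mul_dotProduct_mulVec_le {p : X → K} (hp : ∀ x, 0 < p x) (f : X → K)
    (g : Matrix κ X K) (u : κ → K) :
    2 * (u ⬝ᵥ g *ᵥ f) ≤ ∑ x, p x * f x ^ 2 + u ⬝ᵥ informationMatrix p g *ᵥ u := by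
  calc 2 * (u ⬝ᵥ g *ᵥ f)
      = ∑ x, 2 * ((u ᵥ* g) x * f x) := by rw [dotProduct_mulVec, dotProduct, mul_sum]
    _ ≤ ∑ x, (p x * f x ^ 2 + (u ᵥ* g) x ^ 2 / p x) :=
        sum_le_sum fun x _ => two_mul_mul_le_mul_sq_add_sq_div (hp x) _ _
    _ = ∑ x, p x * f x ^ 2 + u ⬝ᵥ informationMatrix p g *ᵥ u := by
        rw [sum_add_distrib, dotProduct_informationMatrix_mulVec]

theorem two_mul_dotProduct_sum_smul_le {w : ι → K} (hw : ∀ i, 0 ≤ w i) {s : ι → K}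
    {b : ι → κ → K} {C : ι → Matrix κ κ K} {u : κ → K}
    (hle : ∀ i, 2 * (u ⬝ᵥ b i) ≤ s i + u ⬝ᵥ C i *ᵥ u) :
    2 * (u ⬝ᵥ ∑ i, w i • b i) ≤ ∑ i, w i * s i + u ⬝ᵥ (∑ i, w i • C i) *ᵥ u := by
  calc 2 * (u ⬝ᵥ ∑ i, w i • b i)
      = ∑ i, w i * (2 * (u ⬝ᵥ b i)) := by
        simp only [dotProduct_sum, dotProduct_smul, smul_eq_mul, mul_sum, mul_left_comm]
    _ ≤ ∑ i, w i * (s i + u ⬝ᵥ C i *ᵥ u) :=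
        sum_le_sum fun i _ => mul_le_mul_of_nonneg_left (hle i) (hw i)
    _ = ∑ i, w i * s i + u ⬝ᵥ (∑ i, w i • C i) *ᵥ u := by
        simp only [mul_add, sum_add_distrib, sum_mulVec, smul_mulVec, dotProduct_sum,
          dotProduct_smul, smul_eq_mul]

theorem global_barankin_bound_general {p : ι → X → K} (hp : ∀ i x, 0 < p i x)
    {w : ι → K} (hw : ∀ i, 0 ≤ w i) (f : ι → X → K) (g : ι → Matrix κ X K) {u : κ → K}
    (hu : (∑ i, w i • informationMatrix (p i) (g i)) *ᵥ u = ∑ i, w i • (g i *ᵥ f i)) :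
    (∑ i, w i • (g i *ᵥ f i)) ⬝ᵥ u ≤ ∑ i, w i * ∑ x, p i x * f i x ^ 2 := by
  have weighted_bound := two_mul_dotProduct_sum_smul_le hw fun i =>
    two_mul_dotProduct_mulVec_le (hp i) (f i) (g i) u
  rw [hu] at weighted_bound
  rw [dotProduct_comm]
  linarith

end

/-- **Global Barankin bound.**
With `b_w = ∑ i, w i • b^(i)` and `C_w = ∑ i, w i • C^(i)`, for any `u` with `C_w u = b_w`,
the weighted variance satisfies `∑ i, w i * Var i ≥ b_wᵀ u`. -/
theorem global_barankin_bound
    {X : Type*} [Fintype X] {n : ℕ}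
    (p : Fin n → X → ℝ)
    (hp : ∀ i x, 0 < p i x)
    (hpsum : ∀ i, ∑ x : X, p i x = 1)
    (w : Fin n → ℝ) (hw : ∀ i, 0 ≤ w i)
    (h : X → ℝ) (g : Fin n → X → ℝ)
    (E : Fin n → ℝ) (hE : ∀ i, E i = ∑ x : X, p i x * h x)
    (V : Fin n → ℝ) (hV : ∀ i, V i = ∑ x : X, p i x * (h x - E i) ^ 2)
    (C : Fin n → Matrix (Fin n) (Fin n) ℝ)
    (hC : ∀ i j k, C i j k = ∑ x : X, g j x * g k x / p i x)
    (b : Fin n → Fin n → ℝ)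
    (hb : ∀ i j, b i j = ∑ x : X, g j x * (h x - E i))
    (bw : Fin n → ℝ) (hbw : bw = ∑ i, w i • b i)
    (Cw : Matrix (Fin n) (Fin n) ℝ) (hCw : Cw = ∑ i, w i • C i)
    (u : Fin n → ℝ) (hu : Cw.mulVec u = bw) :
    bw ⬝ᵥ u ≤ ∑ i, w i * V i := by
  obtain rfl : V = _ := funext hV
  obtain rfl : C = fun i => informationMatrix (p i) (of g) := funext fun i => Matrix.ext (hC i)
  obtain rfl : b = fun i => of g *ᵥ fun x => h x - E i := funext₂ hb
  subst hbw hCw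
  exact global_barankin_bound_general hp hw (fun i x => h x - E i) (fun _ => of g) hu
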